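/- Fix a depth parameter s ≥ 0 and let P_s denote the depth-s truncated switch distribution. Then for every stationary ergodic probability measure Q on Ω = {1,...,D}^ℤ, Q-almost surely lim_{n→∞} (1/n)·(−log P_s(X_1^n)) = lim_{n→∞} (1/n)·(−log B(X_{s+1}^n|X_1^s, s)) = E_Q[−log Q(X_{s+1}|X_1^s)], where Q(X_{s+1}|X_1^s) = Q(X_1^{s+1})/Q(X_1^s) evaluated at the sample path. -/

import Mathlib

open Filter MeasureTheory
open scoped Topology

/-- Number of occurrences `c(w|z)` of `w` as a substring of `z`. -/
def cnt {D : ℕ} (w z : List (Fin D)) : ℕ :=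
  ((List.range (z.length - w.length + 1)).filter
    (fun i => (z.drop i).take w.length = w)).length

/-- Count `c(w | z_1^{m-1})` of `w` in the string `z` with its last symbol removed,
with the convention that counting in a block of length `-1` (i.e. when `z` itself is
empty) gives `0`. -/
def cntPred {D : ℕ} (w z : List (Fin D)) : ℕ :=
  if z = [] then 0 else cnt w z.dropLast

/-- The prefix `x_1^n` of the one-sided sequence `x` (0-indexed: `x i = x_{i+1}`). -/
def pref {D : ℕ} (x : ℕ → Fin D) (n : ℕ) : List (Fin D) :=
  (List.range n).map x

/-- Adaptive Markov predictor: the natural-number index corresponds to the Markov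
order shifted by one, so `Bpred D xs a (k+1) = B(a | xs, k)` and
`Bpred D xs a 0 = B(a | xs, -1) = 1/D`, where
`B(x_{n+1}|x_1^n, k) = (c(x_{n+1-k}^{n+1}|x_1^n) + B(x_{n+1}|x_1^n, k-1)) /
(c(x_{n+1-k}^{n}|x_1^{n-1}) + 1)`.  Counts of substrings whose indices fall outside
the string are taken to be zero. -/
noncomputable def Bpred (D : ℕ) (xs : List (Fin D)) (a : Fin D) : ℕ → ℝ
  | 0 => 1 / D
  | k + 1 =>
    if k ≤ xs.length then
      ((cnt (xs.drop (xs.length - k) ++ [a]) xs : ℝ) + Bpred D xs a k) /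
      ((cntPred (xs.drop (xs.length - k)) xs : ℝ) + 1)
    else Bpred D xs a k

/-- Partial depth-`s` truncated switch distribution `P_s(x_1^n, k)`, nonzero only for
`-1 ≤ k ≤ min(n-1, s)`. -/
noncomputable def PpartT (D : ℕ) (p : ℕ → ℝ) (s : ℕ) (x : ℕ → Fin D) : ℕ → ℤ → ℝ
  | 0, _ => 0
  | 1, k =>
    if k = -1 then p 0 * Bpred D [] (x 0) 0
    else if k = 0 then (1 - p 0) * Bpred D [] (x 0) 1
    else 0
  | n + 2, k =>
    if -1 ≤ k ∧ k ≤ min ((n : ℤ) + 1) (s : ℤ) then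
      (p (n + 1) * PpartT D p s x (n + 1) k +
        (1 - p (n + 1)) * PpartT D p s x (n + 1) (k - 1)) *
        Bpred D (pref x (n + 1)) (x (n + 1)) (k + 1).toNat
    else 0

/-- The dummy component `P_s(x_1^n, •)` of the depth-`s` truncated switch distribution:
`P_s(x_1^n, •) = 0` for `n < s + 2` and
`P_s(x_1^{n+1}, •) = [P_s(x_1^n, •) + (1-p_n) P_s(x_1^n, s)] B(x_{n+1}|x_1^n, s)`
for `n ≥ s + 1`. -/
noncomputable def PbulT (D : ℕ) (p : ℕ → ℝ) (s : ℕ) (x : ℕ → Fin D) : ℕ → ℝ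
  | 0 => 0
  | m + 1 =>
    if s + 1 ≤ m then
      (PbulT D p s x m + (1 - p m) * PpartT D p s x m (s : ℤ)) *
        Bpred D (pref x m) (x m) (s + 1)
    else 0

/-- The depth-`s` truncated switch distribution
`P_s(x_1^n) = Σ_{k=-1}^{s} P_s(x_1^n, k) + P_s(x_1^n, •)`. -/
noncomputable def PsT (D : ℕ) (p : ℕ → ℝ) (s : ℕ) (x : ℕ → Fin D) (n : ℕ) : ℝ :=
  (∑ kk ∈ Finset.range (s + 2), PpartT D p s x n ((kk : ℤ) - 1)) + PbulT D p s x n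

/-- The two-sided sequence space `Ω = {1,...,D}^ℤ` with the product σ-algebra. -/
abbrev Omega (D : ℕ) := ℤ → Fin D

/-- The shift `T : Ω → Ω`. -/
def shiftT (D : ℕ) : Omega D → Omega D := fun ω i => ω (i + 1)

/-- The cylinder set `{X_1 = x 0, ..., X_n = x (n-1)}`. -/
def cylSet (D : ℕ) (x : ℕ → Fin D) (n : ℕ) : Set (Omega D) :=
  {ω | ∀ i < n, ω ((i : ℤ) + 1) = x i}

/-- The one-sided sample path `X_1, X_2, ...` of `ω` (0-indexed). -/
def path (D : ℕ) (ω : Omega D) : ℕ → Fin D := fun i => ω ((i : ℤ) + 1)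

/-- The cylinder probability `Q(x_1^n)`. -/
noncomputable def Qstr (D : ℕ) (Q : Measure (Omega D)) (x : ℕ → Fin D) (n : ℕ) : ℝ :=
  (Q (cylSet D x n)).toReal

/-!
By the pointwise ergodic theorem, the frequencies of words along almost every path converge to
their probabilities. So the adaptive predictor of each order `k` incurs asymptotic log-loss per
symbol equal to the conditional entropy of a symbol given the `k` preceding ones, and by
stationarity and Jensen's inequality this rate is antitone in `k`. The component of order `k` of
the switch distribution satisfies a recursion driven by that predictor with input from the
component of order `k - 1`; inductively every component, and hence the whole distribution, decays
at rate at least that of order `s`. Conversely, the mass on order `s` together with the dummy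
component is never lost, so it dominates a constant multiple of the product of the predictions of
order `s`.
-/
/-! ### The pointwise ergodic theorem -/

section PointwiseErgodic

variable {α : Type*} {T : α → α} {f : α → ℝ}

lemma bddAbove_range_birkhoffSum_apply_iff (T : α → α) (f : α → ℝ) (x : α) :
    BddAbove (Set.range fun n => birkhoffSum T f n (T x)) ↔
      BddAbove (Set.range fun n => birkhoffSum T f n x) := by
  simp only [bddAbove_def, Set.forall_mem_range]
  constructor
  · rintro ⟨C, hC⟩
    refine ⟨max 0 (f x + C), fun n => ?_⟩
    cases n with
    | zero => simp
    | succ n =>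
      rw [birkhoffSum_succ']
      exact le_max_of_le_right (by linarith [hC n])
  · rintro ⟨C, hC⟩
    refine ⟨C - f x, fun n => ?_⟩
    have hsucc := hC (n + 1)
    rw [birkhoffSum_succ'] at hsucc
    linarith

/-- The maximal function `max_{k ≤ n} S_k f` of the Birkhoff sums `S_k f` of `f`. As `S_0 f = 0`, it
is nonnegative. -/
noncomputable def birkhoffMax (T : α → α) (f : α → ℝ) (n : ℕ) (x : α) : ℝ :=
  partialSups (fun k => birkhoffSum T f k x) n

lemma birkhoffMax_nonneg (T : α → α) (f : α → ℝ) (n : ℕ) (x : α) : 0 ≤ birkhoffMax T f n x :=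
  (birkhoffSum_zero T f x).ge.trans (le_partialSups_of_le (birkhoffSum T f · x) n.zero_le)

lemma birkhoffMax_mono (T : α → α) (f : α → ℝ) (x : α) : Monotone (birkhoffMax T f · x) :=
  partialSups_monotone _

lemma birkhoffMax_succ_sub_birkhoffMax_apply (T : α → α) (f : α → ℝ) (n : ℕ) (x : α) :
    birkhoffMax T f (n + 1) x - birkhoffMax T f n (T x) =
      max (f x) (-birkhoffMax T f n (T x)) := by
  suffices birkhoffMax T f (n + 1) x = max (f x + birkhoffMax T f n (T x)) 0 by
    rw [this, ← max_sub_sub_right, add_sub_cancel_right, zero_sub]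
  have hsucc (m : ℕ) (y : α) : birkhoffMax T f (m + 1) y =
      max (birkhoffMax T f m y) (birkhoffSum T f (m + 1) y) := partialSups_succ _ m
  have hzero (y : α) : birkhoffMax T f 0 y = 0 := birkhoffSum_zero T f y
  induction n with
  | zero => rw [hsucc, hzero, hzero, zero_add, birkhoffSum_one, add_zero, max_comm]
  | succ n ih =>
    rw [hsucc (n + 1) x, ih, hsucc n (T x), birkhoffSum_succ' T f (n + 1), add_max,
      max_right_comm]

lemma tendsto_birkhoffMax_succ_sub_birkhoffMax_apply {x : α}
    (hx : ¬BddAbove (Set.range fun n => birkhoffSum T f n x)) :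
    Tendsto (fun n => birkhoffMax T f (n + 1) x - birkhoffMax T f n (T x)) atTop (𝓝 (f x)) := by
  rw [← bddAbove_range_birkhoffSum_apply_iff] at hx
  obtain ⟨_, ⟨N, rfl⟩, hN⟩ := not_bddAbove_iff.1 hx (-f x)
  refine tendsto_const_nhds.congr' ?_
  filter_upwards [eventually_ge_atTop N] with n hn
  have hmax : birkhoffSum T f N (T x) ≤ birkhoffMax T f n (T x) :=
    le_partialSups_of_le (fun k => birkhoffSum T f k (T x)) hn
  rw [birkhoffMax_succ_sub_birkhoffMax_apply, max_eq_left (by linarith)]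

variable [MeasurableSpace α] {μ : Measure α}

lemma integrable_birkhoffMax (hT : MeasurePreserving T μ μ) (hf : Integrable f μ) (n : ℕ) :
    Integrable (birkhoffMax T f n) μ := by
  have hsum (k : ℕ) : Integrable (birkhoffSum T f k) μ :=
    integrable_finsetSum _ fun i _ => (hT.iterate i).integrable_comp_of_integrable hf
  induction n with
  | zero => exact hsum 0
  | succ n ih =>
    have hsucc : birkhoffMax T f (n + 1) = birkhoffMax T f n ⊔ birkhoffSum T f (n + 1) :=
      funext fun x => partialSups_succ (fun k => birkhoffSum T f k x) n
    exact hsucc ▸ ih.sup (hsum (n + 1))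

-- Garsia's argument: `M_{n+1} - M_n ∘ T` has nonnegative integral and converges to `f` dominatedly.
lemma integral_nonneg_of_ae_not_bddAbove_birkhoffSum (hT : MeasurePreserving T μ μ)
    (hf : Integrable f μ)
    (hub : ∀ᵐ x ∂μ, ¬BddAbove (Set.range fun n => birkhoffSum T f n x)) :
    0 ≤ ∫ x, f x ∂μ := by
  have hint := integrable_birkhoffMax hT hf
  have hint_comp (n : ℕ) : Integrable (fun x => birkhoffMax T f n (T x)) μ :=
    hT.integrable_comp_of_integrable (hint n)
  have hlim : Tendsto (fun n => ∫ x, (birkhoffMax T f (n + 1) x - birkhoffMax T f n (T x)) ∂μ)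
      atTop (𝓝 (∫ x, f x ∂μ)) := by
    refine tendsto_integral_of_dominated_convergence (fun x => |f x|)
      (fun n => ((hint (n + 1)).sub (hint_comp n)).aestronglyMeasurable) hf.abs (fun n => ?_)
      (hub.mono fun x => tendsto_birkhoffMax_succ_sub_birkhoffMax_apply)
    refine Eventually.of_forall fun x => ?_
    rw [birkhoffMax_succ_sub_birkhoffMax_apply, Real.norm_eq_abs, abs_le]
    have := birkhoffMax_nonneg T f n (T x)
    exact ⟨le_max_of_le_left (neg_abs_le _),
      max_le (le_abs_self _) (by linarith [abs_nonneg (f x)])⟩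
  refine ge_of_tendsto' hlim fun n => ?_
  have hcomp : ∫ x, birkhoffMax T f n (T x) ∂μ = ∫ x, birkhoffMax T f n x ∂μ := by
    conv_rhs => rw [← hT.map_eq]
    exact (integral_map hT.aemeasurable (hT.map_eq.symm ▸ (hint n).aestronglyMeasurable)).symm
  rw [integral_sub (hint (n + 1)) (hint_comp n), hcomp, sub_nonneg]
  exact integral_mono (hint n) (hint (n + 1)) fun x => birkhoffMax_mono T f x n.le_succ

lemma nullMeasurableSet_bddAbove_range_birkhoffSum (hT : Measure.QuasiMeasurePreserving T μ μ)
    (hf : AEMeasurable f μ) :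
    NullMeasurableSet {x | BddAbove (Set.range fun n => birkhoffSum T f n x)} μ := by
  have hmeas (n : ℕ) : Measurable (birkhoffSum T (hf.mk f) n) :=
    Finset.measurable_fun_sum _ fun i _ => hf.measurable_mk.comp (hT.measurable.iterate i)
  refine (measurableSet_bddAbove_range hmeas).nullMeasurableSet.congr
    (eventuallyEq_set.2 ?_)
  filter_upwards [ae_all_iff.2 (hT.birkhoffSum_ae_eq_of_ae_eq hf.ae_eq_mk)] with x hx
  simp only [hx]

lemma ae_bddAbove_birkhoffSum_of_integral_neg (hT : Ergodic T μ) (hf : Integrable f μ)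
    (hneg : ∫ x, f x ∂μ < 0) :
    ∀ᵐ x ∂μ, BddAbove (Set.range fun n => birkhoffSum T f n x) := by
  have hinv : T ⁻¹' {x | BddAbove (Set.range fun n => birkhoffSum T f n x)} =
      {x | BddAbove (Set.range fun n => birkhoffSum T f n x)} :=
    Set.ext fun x => bddAbove_range_birkhoffSum_apply_iff T f x
  refine (hT.quasiErgodic.ae_mem_or_ae_notMem₀ (nullMeasurableSet_bddAbove_range_birkhoffSum
    hT.quasiMeasurePreserving hf.aemeasurable) hinv.eventuallyEq).resolve_right fun hub => ?_
  exact hneg.not_ge (integral_nonneg_of_ae_not_bddAbove_birkhoffSum hT.toMeasurePreserving hf hub)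

variable [IsProbabilityMeasure μ]

lemma ae_eventually_birkhoffAverage_lt (hT : Ergodic T μ) (hf : Integrable f μ) {a : ℝ}
    (ha : ∫ x, f x ∂μ < a) : ∀ᵐ x ∂μ, ∀ᶠ n in atTop, birkhoffAverage ℝ T f n x < a := by
  obtain ⟨b, hb, hba⟩ := exists_between ha
  have hneg : ∫ x, (f x - b) ∂μ < 0 := by
    rw [integral_sub hf (integrable_const b)]
    simpa using hb
  filter_upwards [ae_bddAbove_birkhoffSum_of_integral_neg hT (hf.sub (integrable_const b)) hneg]
    with x ⟨C, hC⟩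
  filter_upwards [(tendsto_const_div_atTop_nhds_zero_nat C).eventually_lt_const (sub_pos.2 hba),
    eventually_gt_atTop 0] with n hn hn0
  have hsum : birkhoffSum T f n x - n * b ≤ C := by
    simpa [birkhoffSum] using hC (Set.mem_range_self n)
  have hn' : (0 : ℝ) < n := Nat.cast_pos.2 hn0
  rw [div_lt_iff₀ hn'] at hn
  rw [birkhoffAverage, smul_eq_mul, inv_mul_lt_iff₀ hn']
  linarith

theorem ae_tendsto_birkhoffAverage (hT : Ergodic T μ) (hf : Integrable f μ) :
    ∀ᵐ x ∂μ, Tendsto (birkhoffAverage ℝ T f · x) atTop (𝓝 (∫ x, f x ∂μ)) := by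
  have hupper {g : α → ℝ} (hg : Integrable g μ) : ∀ᵐ x ∂μ, ∀ q : ℚ, ∫ y, g y ∂μ < q →
      ∀ᶠ n in atTop, birkhoffAverage ℝ T g n x < q :=
    ae_all_iff.2 fun q => eventually_imp_distrib_left.2 (ae_eventually_birkhoffAverage_lt hT hg)
  filter_upwards [hupper hf, hupper hf.neg] with x hle hge
  refine tendsto_order.2 ⟨fun a ha => ?_, fun a ha => ?_⟩
  · obtain ⟨q, hq, hqa⟩ := exists_rat_btwn (neg_lt_neg ha)
    filter_upwards [hge q (by simpa [integral_neg] using hq)] with n hn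
    rw [birkhoffAverage_neg] at hn
    simp only [Pi.neg_apply] at hn
    linarith
  · obtain ⟨q, hq, hqa⟩ := exists_rat_btwn ha
    exact (hle q hq).mono fun n hn => hn.trans hqa

end PointwiseErgodic

/-! ### Conditional entropy of finite-valued random variables -/

section ConditionalEntropy

open ProbabilityTheory

variable {α β β' γ : Type*} [MeasurableSpace α] {μ : Measure α}

lemma ae_measureReal_preimage_singleton_pos [IsFiniteMeasure μ] [Countable β] (Y : α → β) :
    ∀ᵐ x ∂μ, 0 < μ.real (Y ⁻¹' {Y x}) := by
  have hnull : ∀ᵐ x ∂μ, ∀ b, μ (Y ⁻¹' {b}) = 0 → Y x ≠ b :=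
    ae_all_iff.2 fun b => eventually_imp_distrib_left.2 measure_eq_zero_iff_ae_notMem.1
  filter_upwards [hnull] with x hx
  exact ENNReal.toReal_pos (fun h => hx _ h rfl) (measure_ne_top _ _)

lemma integral_comp_eq_sum_measureReal [IsFiniteMeasure μ] [Fintype β] [MeasurableSpace β]
    [MeasurableSingletonClass β] {Y : α → β} (hY : Measurable Y) (g : β → ℝ) :
    ∫ x, g (Y x) ∂μ = ∑ b, μ.real (Y ⁻¹' {b}) * g b := by
  rw [← integral_map hY.aemeasurable (measurable_of_finite g).aestronglyMeasurable,
    integral_fintype Integrable.of_finite]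
  simp only [map_measureReal_apply hY (measurableSet_singleton _), smul_eq_mul]

-- Jensen's inequality, in the form `log t ≤ t - 1`.
lemma integral_neg_log_le_of_integral_div_le_one [IsProbabilityMeasure μ] {f g : α → ℝ}
    (hf : ∀ᵐ x ∂μ, 0 < f x) (hg : ∀ᵐ x ∂μ, 0 < g x)
    (hf_log : Integrable (fun x => -Real.log (f x)) μ)
    (hg_log : Integrable (fun x => -Real.log (g x)) μ)
    (hdiv : Integrable (fun x => f x / g x) μ) (hle : ∫ x, f x / g x ∂μ ≤ 1) :
    ∫ x, -Real.log (g x) ∂μ ≤ ∫ x, -Real.log (f x) ∂μ := by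
  have hmono : ∫ x, (-Real.log (g x) - -Real.log (f x)) ∂μ ≤ ∫ x, (f x / g x - 1) ∂μ := by
    refine integral_mono_ae (hg_log.sub hf_log) (hdiv.sub (integrable_const 1)) ?_
    filter_upwards [hf, hg] with x hfx hgx
    have := Real.log_le_sub_one_of_pos (div_pos hfx hgx)
    rw [Real.log_div hfx.ne' hgx.ne'] at this
    linarith
  rw [integral_sub hg_log hf_log, integral_sub hdiv (integrable_const 1), integral_const,
    probReal_univ, one_smul] at hmono
  linarith

/-- The conditional entropy `H(Z | Y)`, in nats, of the random variable `Z` given the random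
variable `Y`, both taking finitely many values. -/
noncomputable def condEntropy (μ : Measure α) (Z : α → γ) (Y : α → β) : ℝ :=
  ∫ x, -Real.log (μ[|Y ⁻¹' {Y x}].real (Z ⁻¹' {Z x})) ∂μ

lemma measureReal_cond_eq_div {s : Set α} (hs : MeasurableSet s) (t : Set α) :
    μ[|s].real t = μ.real (s ∩ t) / μ.real s := by
  simp only [measureReal_def, cond_apply hs, ENNReal.toReal_mul, ENNReal.toReal_inv,
    div_eq_inv_mul]

lemma sum_cond_preimage_singleton_le_one [Fintype γ] [MeasurableSpace γ]
    [MeasurableSingletonClass γ] {Z : α → γ} (hZ : Measurable Z) (s : Set α) :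
    ∑ c, μ[|s].real (Z ⁻¹' {c}) ≤ 1 := by
  rw [sum_measureReal_preimage_singleton _ fun c _ => hZ (measurableSet_singleton c)]
  exact measureReal_le_one

variable [MeasurableSpace β] [MeasurableSingletonClass β] {Y : α → β}

lemma ae_cond_preimage_singleton_pos [IsFiniteMeasure μ] [Countable β] [Countable γ]
    (hY : Measurable Y) (Z : α → γ) : ∀ᵐ x ∂μ, 0 < μ[|Y ⁻¹' {Y x}].real (Z ⁻¹' {Z x}) := by
  filter_upwards [ae_measureReal_preimage_singleton_pos (μ := μ) Y,
    ae_measureReal_preimage_singleton_pos (μ := μ) fun x => (Y x, Z x)] with x hx hxz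
  rw [← Set.singleton_prod_singleton, Set.mk_preimage_prod] at hxz
  rw [measureReal_cond_eq_div (hY (measurableSet_singleton _))]
  exact div_pos hxz hx

variable [MeasurableSpace γ] [MeasurableSingletonClass γ] {Z : α → γ}

lemma integral_div_cond_le_one [IsProbabilityMeasure μ] [Finite β] [Fintype γ]
    (hY : Measurable Y) (hZ : Measurable Z) {φ : β → γ → ℝ} (hφ : ∀ b c, 0 ≤ φ b c)
    (hφ_sum : ∀ b, ∑ c, φ b c ≤ 1) :
    ∫ x, φ (Y x) (Z x) / μ[|Y ⁻¹' {Y x}].real (Z ⁻¹' {Z x}) ∂μ ≤ 1 := by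
  have := Fintype.ofFinite β
  have hterm (b : β) (c : γ) :
      μ.real ((fun x => (Y x, Z x)) ⁻¹' {(b, c)}) * (φ b c / μ[|Y ⁻¹' {b}].real (Z ⁻¹' {c})) ≤
        μ.real (Y ⁻¹' {b}) * φ b c := by
    rw [← Set.singleton_prod_singleton, Set.mk_preimage_prod,
      measureReal_cond_eq_div (hY (measurableSet_singleton b))]
    set m := μ.real (Y ⁻¹' {b} ∩ Z ⁻¹' {c})
    calc m * (φ b c / (m / μ.real (Y ⁻¹' {b})))
        = μ.real (Y ⁻¹' {b}) * (φ b c * (m / m)) := by rw [div_div_eq_mul_div]; ring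
      _ ≤ μ.real (Y ⁻¹' {b}) * φ b c := by
        gcongr
        exact mul_le_of_le_one_right (hφ b c) (div_self_le_one m)
  rw [integral_comp_eq_sum_measureReal (hY.prodMk hZ)
    fun bc => φ bc.1 bc.2 / μ[|Y ⁻¹' {bc.1}].real (Z ⁻¹' {bc.2}), Fintype.sum_prod_type]
  calc ∑ b, ∑ c, μ.real ((fun x => (Y x, Z x)) ⁻¹' {(b, c)}) *
        (φ b c / μ[|Y ⁻¹' {b}].real (Z ⁻¹' {c}))
      ≤ ∑ b, ∑ c, μ.real (Y ⁻¹' {b}) * φ b c :=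
        Finset.sum_le_sum fun b _ => Finset.sum_le_sum fun c _ => hterm b c
    _ ≤ ∑ b, μ.real (Y ⁻¹' {b}) := by
        simp only [← Finset.mul_sum]
        exact Finset.sum_le_sum fun b _ =>
          mul_le_of_le_one_right measureReal_nonneg (hφ_sum b)
    _ = 1 := by
        rw [sum_measureReal_preimage_singleton _ fun b _ => hY (measurableSet_singleton b),
          Finset.coe_univ, Set.preimage_univ, probReal_univ]

theorem condEntropy_le_integral_neg_log [IsProbabilityMeasure μ] [Finite β] [Fintype γ]
    (hY : Measurable Y) (hZ : Measurable Z) {φ : β → γ → ℝ} (hφ : ∀ b c, 0 ≤ φ b c)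
    (hφ_sum : ∀ b, ∑ c, φ b c ≤ 1) (hφ_pos : ∀ᵐ x ∂μ, 0 < φ (Y x) (Z x)) :
    condEntropy μ Z Y ≤ ∫ x, -Real.log (φ (Y x) (Z x)) ∂μ := by
  have hint (g : β → γ → ℝ) : Integrable (fun x => g (Y x) (Z x)) μ :=
    (Integrable.of_finite (f := fun bc : β × γ => g bc.1 bc.2)).comp_measurable (hY.prodMk hZ)
  exact integral_neg_log_le_of_integral_div_le_one hφ_pos (ae_cond_preimage_singleton_pos hY Z)
    (hint fun b c => -Real.log (φ b c))
    (hint fun b c => -Real.log (μ[|Y ⁻¹' {b}].real (Z ⁻¹' {c})))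
    (hint fun b c => φ b c / μ[|Y ⁻¹' {b}].real (Z ⁻¹' {c}))
    (integral_div_cond_le_one hY hZ hφ hφ_sum)

lemma condEntropy_le_log_card [IsProbabilityMeasure μ] [Finite β] [Fintype γ]
    (hY : Measurable Y) (hZ : Measurable Z) :
    condEntropy μ Z Y ≤ Real.log (Fintype.card γ) := by
  obtain ⟨x⟩ : Nonempty α := μ.nonempty_of_neZero
  have : Nonempty γ := ⟨Z x⟩
  simpa using condEntropy_le_integral_neg_log (μ := μ) hY hZ
    (φ := fun _ _ => (Fintype.card γ : ℝ)⁻¹) (fun _ _ => by positivity) (fun _ => by simp)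
    (.of_forall fun _ => by positivity)

lemma condEntropy_le_condEntropy_comp [IsProbabilityMeasure μ] [Finite β] [Finite γ]
    [MeasurableSpace β'] [MeasurableSingletonClass β'] [Countable β'] (hY : Measurable Y)
    (hZ : Measurable Z) (τ : β → β') : condEntropy μ Z Y ≤ condEntropy μ Z (τ ∘ Y) :=
  have := Fintype.ofFinite γ
  condEntropy_le_integral_neg_log hY hZ
    (φ := fun b c => μ[|(τ ∘ Y) ⁻¹' {τ b}].real (Z ⁻¹' {c}))
    (fun _ _ => measureReal_nonneg) (fun _ => sum_cond_preimage_singleton_le_one hZ _)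
    (ae_cond_preimage_singleton_pos ((measurable_of_finite τ).comp hY) Z)

lemma condEntropy_comp_measurePreserving [Countable β] [Countable γ] {α' : Type*}
    [MeasurableSpace α'] {ν : Measure α'} {T : α' → α} (hT : MeasurePreserving T ν μ)
    (hY : Measurable Y) (hZ : Measurable Z) :
    condEntropy ν (Z ∘ T) (Y ∘ T) = condEntropy μ Z Y := by
  have hcond (b : β) (c : γ) : ν[|(Y ∘ T) ⁻¹' {b}].real ((Z ∘ T) ⁻¹' {c}) =
      μ[|Y ⁻¹' {b}].real (Z ⁻¹' {c}) := by
    have hb := hY (measurableSet_singleton b)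
    have hc := hZ (measurableSet_singleton c)
    rw [Set.preimage_comp, Set.preimage_comp, measureReal_cond_eq_div (hT.measurable hb),
      measureReal_cond_eq_div hb, ← Set.preimage_inter,
      hT.measureReal_preimage (hb.inter hc).nullMeasurableSet,
      hT.measureReal_preimage hb.nullMeasurableSet]
  have hmeas (g : β → γ → ℝ) : AEStronglyMeasurable (fun x => g (Y x) (Z x)) (ν.map T) :=
    ((measurable_of_countable fun bc : β × γ => g bc.1 bc.2).comp
      (hY.prodMk hZ)).aestronglyMeasurable
  simp only [condEntropy, hcond]
  rw [← hT.map_eq, integral_map hT.aemeasurable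
    (hmeas fun b c => -Real.log ((ν.map T)[|Y ⁻¹' {b}].real (Z ⁻¹' {c})))]
  rfl

end ConditionalEntropy

/-! ### Averages of real sequences -/

section Averages

lemma tendsto_add_div_natCast_add {u : ℕ → ℝ} {c : ℝ}
    (hu : Tendsto (fun n : ℕ => u n / n) atTop (𝓝 c)) (a b : ℕ) :
    Tendsto (fun n : ℕ => u (n + a) / ((n + b : ℕ) : ℝ)) atTop (𝓝 c) := by
  have hratio : Tendsto (fun n : ℕ => ((n + a : ℕ) : ℝ) / ((n + b : ℕ) : ℝ)) atTop (𝓝 1) := by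
    have hdiv := (tendsto_natCast_div_add_atTop (b : ℝ)).div
      (tendsto_natCast_div_add_atTop (a : ℝ)) one_ne_zero
    rw [div_one] at hdiv
    refine hdiv.congr' ?_
    filter_upwards [eventually_ne_atTop 0] with n hn
    simp only [Pi.div_apply, Nat.cast_add]
    rw [div_div_div_cancel_left' _ _ (Nat.cast_ne_zero.2 hn)]
  have hmul := ((tendsto_add_atTop_iff_nat a).2 hu).mul hratio
  rw [mul_one] at hmul
  refine hmul.congr' ?_
  filter_upwards [eventually_gt_atTop 0] with n hn
  exact div_mul_div_cancel₀ (by positivity)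

lemma tendsto_sum_div_of_tendsto_add_sub {u v : ℕ → ℝ} {c : ℝ} (k : ℕ)
    (hsub : Tendsto (fun m => u (m + k) - v m) atTop (𝓝 0))
    (hv : Tendsto (fun n : ℕ => (∑ m ∈ Finset.range n, v m) / n) atTop (𝓝 c)) :
    Tendsto (fun n : ℕ => (∑ m ∈ Finset.range n, u m) / n) atTop (𝓝 c) := by
  have hshift : Tendsto (fun n : ℕ => (∑ m ∈ Finset.range n, u (m + k)) / n) atTop (𝓝 c) := by
    have hadd := hsub.cesaro.add hv
    rw [zero_add] at hadd
    refine hadd.congr fun n => ?_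
    rw [Finset.sum_sub_distrib]
    ring
  have hinit : Tendsto (fun n : ℕ => (∑ m ∈ Finset.range k, u m) / ((n + k : ℕ) : ℝ)) atTop
      (𝓝 0) :=
    (tendsto_add_atTop_iff_nat (f := fun n : ℕ => (∑ m ∈ Finset.range k, u m) / (n : ℝ)) k).2
      (tendsto_const_div_atTop_nhds_zero_nat _)
  have hsum := hinit.add (tendsto_add_div_natCast_add hshift 0 k)
  rw [zero_add] at hsum
  rw [← tendsto_add_atTop_iff_nat k]
  refine hsum.congr fun n => ?_
  rw [← add_div, add_zero, add_comm n k, Finset.sum_range_add]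
  simp only [add_comm k]

lemma tendsto_add_div_add_one {u v b : ℕ → ℝ} {a c : ℝ}
    (hu : Tendsto (fun n : ℕ => u n / n) atTop (𝓝 a))
    (hv : Tendsto (fun n : ℕ => v n / n) atTop (𝓝 c)) (hc : c ≠ 0)
    (hb : ∀ n, b n ∈ Set.Icc (0 : ℝ) 1) :
    Tendsto (fun n => (u n + b n) / (v n + 1)) atTop (𝓝 (a / c)) := by
  have hone : Tendsto (fun n : ℕ => (1 : ℝ) / n) atTop (𝓝 0) :=
    tendsto_const_div_atTop_nhds_zero_nat 1
  have hbn : Tendsto (fun n : ℕ => b n / n) atTop (𝓝 0) :=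
    squeeze_zero (fun n => div_nonneg (hb n).1 n.cast_nonneg)
      (fun n => div_le_div_of_nonneg_right (hb n).2 n.cast_nonneg) hone
  have hdiv := (hu.add hbn).div (hv.add hone) (by rwa [add_zero])
  rw [add_zero, add_zero] at hdiv
  refine hdiv.congr' ?_
  filter_upwards [eventually_ne_atTop 0] with n hn
  simp only [Pi.div_apply]
  rw [← add_div, ← add_div, div_div_div_cancel_right₀ (Nat.cast_ne_zero.2 hn)]

lemma tendsto_diag_of_finite {ι α : Type*} [Finite ι] {l : Filter α} {F : ι → ℕ → α} {y : ℕ → ι}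
    (hF : ∀ m, Tendsto (F (y m)) atTop l) : Tendsto (fun m => F (y m) m) atTop l := by
  intro U hU
  have hall : ∀ᶠ m in atTop, ∀ i ∈ Set.range y, F i m ∈ U :=
    eventually_all.2 fun i => eventually_imp_distrib_left.2 fun ⟨m, hm⟩ => hm ▸ hF m hU
  exact hall.mono fun m hm => hm (y m) (Set.mem_range_self m)

end Averages

/-! ### Word counts and adaptive Markov predictors -/

section Words

variable {D : ℕ}

lemma length_pref (x : ℕ → Fin D) (n : ℕ) : (pref x n).length = n := by
  rw [pref, List.length_map, List.length_range]

lemma pref_add (x : ℕ → Fin D) (m n : ℕ) :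
    pref x (m + n) = pref x m ++ pref (fun j => x (m + j)) n := by
  simp only [pref, List.range_add, List.map_append, List.map_map, Function.comp_def]

lemma drop_pref (x : ℕ → Fin D) (m n : ℕ) :
    (pref x (m + n)).drop m = pref (fun j => x (m + j)) n := by
  rw [pref_add, List.drop_left' (length_pref x m)]

lemma take_drop_pref (x : ℕ → Fin D) {i k n : ℕ} (h : i + k ≤ n) :
    ((pref x n).drop i).take k = pref (fun j => x (i + j)) k := by
  obtain ⟨r, rfl⟩ := Nat.exists_eq_add_of_le h
  rw [add_assoc, drop_pref, pref_add, List.take_left' (length_pref _ k)]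

lemma pref_succ (x : ℕ → Fin D) (n : ℕ) : pref x (n + 1) = pref x n ++ [x n] := pref_add x n 1

lemma cntPred_pref_succ (w : List (Fin D)) (x : ℕ → Fin D) (n : ℕ) :
    cntPred w (pref x (n + 1)) = cnt w (pref x n) := by
  rw [cntPred, pref_succ, if_neg (List.concat_ne_nil _ _), List.dropLast_concat]

lemma cnt_eq_card_filter (w z : List (Fin D)) :
    cnt w z = (Finset.filter (fun i => (z.drop i).take w.length = w)
      (Finset.range (z.length - w.length + 1))).card := rfl

lemma cnt_append_singleton_le (v z : List (Fin D)) (a : Fin D) :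
    cnt (v ++ [a]) z ≤ cntPred v z := by
  rcases eq_or_ne z [] with rfl | hz
  · simp [cnt]
  rw [cntPred, if_neg hz, cnt_eq_card_filter, cnt_eq_card_filter]
  refine Finset.card_le_card fun i hi => ?_
  simp only [Finset.mem_filter, Finset.mem_range, List.length_append, List.length_singleton,
    List.length_dropLast] at hi ⊢
  have hocc := hi.2
  have hlen := congrArg List.length hocc
  simp only [List.length_take, List.length_drop, List.length_append, List.length_singleton] at hlen
  refine ⟨by omega, ?_⟩
  have htake := congrArg (List.take v.length) hocc
  rw [List.take_take, List.take_left' rfl, min_eq_left (Nat.le_succ _)] at htake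
  rw [List.dropLast_eq_take, List.drop_take, List.take_take, min_eq_left (by omega), htake]

lemma Bpred_pos (xs : List (Fin D)) (a : Fin D) (k : ℕ) : 0 < Bpred D xs a k := by
  induction k with
  | zero => exact one_div_pos.2 (Nat.cast_pos.2 a.pos)
  | succ k ih =>
    rw [Bpred]
    split_ifs
    · positivity
    · exact ih

lemma Bpred_le_one (xs : List (Fin D)) (a : Fin D) (k : ℕ) : Bpred D xs a k ≤ 1 := by
  induction k with
  | zero => exact (div_le_one (Nat.cast_pos.2 a.pos)).2 (Nat.one_le_cast.2 a.pos)
  | succ k ih =>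
    rw [Bpred]
    split_ifs
    · rw [div_le_one (by positivity)]
      have hcnt : (cnt (xs.drop (xs.length - k) ++ [a]) xs : ℝ) ≤
          cntPred (xs.drop (xs.length - k)) xs := Nat.cast_le.2 (cnt_append_singleton_le _ _ _)
      exact add_le_add hcnt ih
    · exact ih

lemma Bpred_pref (x : ℕ → Fin D) (i k : ℕ) :
    Bpred D (pref x (i + k)) (x (i + k)) (k + 1) =
      ((cnt (pref (fun j => x (i + j)) (k + 1)) (pref x (i + k)) : ℝ) +
        Bpred D (pref x (i + k)) (x (i + k)) k) /
      ((cntPred (pref (fun j => x (i + j)) k) (pref x (i + k)) : ℝ) + 1) := by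
  rw [Bpred, length_pref, if_pos (Nat.le_add_left k i), Nat.add_sub_cancel, drop_pref,
    pref_succ (fun j => x (i + j))]

lemma tendsto_cntPred_div {x : ℕ → Fin D} {w : List (Fin D)} {c : ℝ}
    (hw : Tendsto (fun n : ℕ => (cnt w (pref x n) : ℝ) / n) atTop (𝓝 c)) :
    Tendsto (fun n : ℕ => (cntPred w (pref x n) : ℝ) / n) atTop (𝓝 c) := by
  rw [← tendsto_add_atTop_iff_nat 1]
  simp only [cntPred_pref_succ]
  exact tendsto_add_div_natCast_add hw 0 1

end Words

/-! ### Predictive entropy of ergodic processes -/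

section ErgodicSource

variable {D : ℕ}

lemma path_shiftT_iterate (ω : Omega D) (i : ℕ) :
    path D ((shiftT D)^[i] ω) = fun j => path D ω (i + j) := by
  induction i generalizing ω with
  | zero => simp
  | succ i ih =>
    rw [Function.iterate_succ_apply, ih]
    funext j
    simp only [path, shiftT]
    congr 1
    push_cast
    ring

/-- The random word `X_1^k` formed by the first `k` symbols of the sample path. -/
def block (k : ℕ) (ω : Omega D) : Fin k → Fin D := fun i => path D ω i

lemma measurable_path_apply (k : ℕ) : Measurable fun ω : Omega D => path D ω k :=
  measurable_pi_apply _

lemma measurable_block (k : ℕ) : Measurable (block k : Omega D → Fin k → Fin D) :=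
  measurable_pi_lambda _ fun i => measurable_path_apply i

lemma pref_path (ω : Omega D) (k : ℕ) : pref (path D ω) k = List.ofFn (block k ω) :=
  List.ext_getElem (by simp [pref]) fun i _ _ => by simp [pref, block]

lemma preimage_block_succ (k : ℕ) (ω : Omega D) :
    block (k + 1) ⁻¹' {block (k + 1) ω} =
      block k ⁻¹' {block k ω} ∩ (fun ω' => path D ω' k) ⁻¹' {path D ω k} := by
  ext ω'
  simp only [Set.mem_inter_iff, Set.mem_preimage, Set.mem_singleton_iff, funext_iff,
    Fin.forall_fin_succ', block, Fin.val_castSucc, Fin.val_last]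

lemma block_comp_shiftT (k : ℕ) :
    block k ∘ shiftT D = Fin.tail ∘ (block (k + 1) : Omega D → Fin (k + 1) → Fin D) := by
  funext ω i
  simp [block, Fin.tail, path, shiftT]

lemma Qstr_path (Q : Measure (Omega D)) (ω : Omega D) (k : ℕ) :
    Qstr D Q (path D ω) k = Q.real (block k ⁻¹' {block k ω}) := by
  rw [Qstr, measureReal_def]
  congr 2
  ext ω'
  simp [cylSet, block, path, funext_iff, Fin.forall_iff]

/-- The expected asymptotic log-loss per symbol of the predictor `Bpred` with the same index, in
nats: `markovEntropy Q (k + 1)` is the conditional entropy of `X_{k+1}` given `X_1^k` and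
`markovEntropy Q 0` is the log-loss of the uniform predictor. -/
noncomputable def markovEntropy (Q : Measure (Omega D)) : ℕ → ℝ
  | 0 => Real.log D
  | k + 1 => ∫ ω, -Real.log (Qstr D Q (path D ω) (k + 1) / Qstr D Q (path D ω) k) ∂Q

lemma markovEntropy_succ_eq_condEntropy (Q : Measure (Omega D)) (k : ℕ) :
    markovEntropy Q (k + 1) = condEntropy Q (fun ω => path D ω k) (block k) := by
  simp only [markovEntropy, condEntropy, Qstr_path, preimage_block_succ,
    measureReal_cond_eq_div (measurable_block k (measurableSet_singleton _))]

lemma cnt_pref_path (ω : Omega D) {k : ℕ} (w : Fin k → Fin D) (n : ℕ) :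
    (cnt (List.ofFn w) (pref (path D ω) (n + k)) : ℝ) =
      birkhoffSum (shiftT D) ((block k ⁻¹' {w}).indicator 1) (n + 1) ω := by
  classical
  rw [cnt_eq_card_filter, birkhoffSum, length_pref, List.length_ofFn, Nat.add_sub_cancel,
    Finset.natCast_card_filter]
  refine Finset.sum_congr rfl fun i hi => ?_
  rw [take_drop_pref _ (by grind), ← path_shiftT_iterate, pref_path, Set.indicator_apply]
  exact if_congr List.ofFn_inj rfl rfl

variable {Q : Measure (Omega D)}

-- The context takes finitely many values, so the empirical conditional probabilities converge
-- uniformly over the contexts met along the orbit.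
lemma tendsto_neg_log_Bpred_sub {ω : Omega D} (k : ℕ)
    (hfreq : ∀ (k : ℕ) (w : Fin k → Fin D),
      Tendsto (fun n : ℕ => (cnt (List.ofFn w) (pref (path D ω) n) : ℝ) / n) atTop
        (𝓝 (Q.real (block k ⁻¹' {w}))))
    (hpos : ∀ k i : ℕ, 0 < Q.real (block k ⁻¹' {block k ((shiftT D)^[i] ω)})) :
    Tendsto (fun i => -Real.log (Bpred D (pref (path D ω) (i + k)) (path D ω (i + k)) (k + 1)) -
      -Real.log (Qstr D Q (path D ((shiftT D)^[i] ω)) (k + 1) /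
        Qstr D Q (path D ((shiftT D)^[i] ω)) k)) atTop (𝓝 0) := by
  let b (n : ℕ) : ℝ := Bpred D (pref (path D ω) n) (path D ω n) k
  let F (w : Fin (k + 1) → Fin D) (n : ℕ) : ℝ :=
    -Real.log ((cnt (List.ofFn w) (pref (path D ω) n) + b n) /
      (cntPred (List.ofFn (Fin.init w)) (pref (path D ω) n) + 1)) -
    -Real.log (Q.real (block (k + 1) ⁻¹' {w}) / Q.real (block k ⁻¹' {Fin.init w}))
  have hF (i : ℕ) : Tendsto (F (block (k + 1) ((shiftT D)^[i] ω))) atTop (𝓝 0) := by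
    have hratio := tendsto_add_div_add_one (hfreq _ (block (k + 1) ((shiftT D)^[i] ω)))
      (tendsto_cntPred_div (hfreq _ (block k ((shiftT D)^[i] ω)))) (hpos k i).ne'
      (b := b) fun n => ⟨(Bpred_pos _ _ _).le, Bpred_le_one _ _ _⟩
    exact tendsto_sub_nhds_zero_iff.2 (hratio.log (div_pos (hpos (k + 1) i) (hpos k i)).ne').neg
  refine (tendsto_diag_of_finite (F := fun w i => F w (i + k)) fun i =>
    (tendsto_add_atTop_iff_nat k).2 (hF i)).congr fun i => ?_
  simp only [F, Qstr_path]
  rw [Bpred_pref, ← path_shiftT_iterate, pref_path _ (k + 1), pref_path _ k]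
  rfl

variable [IsProbabilityMeasure Q]

lemma antitone_markovEntropy (hQ : MeasurePreserving (shiftT D) Q Q) :
    Antitone (markovEntropy Q) := by
  refine antitone_nat_of_succ_le fun k => ?_
  rw [markovEntropy_succ_eq_condEntropy]
  cases k with
  | zero =>
    simpa only [markovEntropy, Fintype.card_fin] using
      condEntropy_le_log_card (μ := Q) (measurable_block 0) (measurable_path_apply 0)
  | succ k =>
    calc condEntropy Q (fun ω => path D ω (k + 1)) (block (k + 1))
        ≤ condEntropy Q (fun ω => path D ω (k + 1)) (Fin.tail ∘ block (k + 1)) :=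
          condEntropy_le_condEntropy_comp (measurable_block _) (measurable_path_apply _) Fin.tail
      _ = condEntropy Q ((fun ω => path D ω k) ∘ shiftT D) (block k ∘ shiftT D) := by
          rw [block_comp_shiftT]
          rfl
      _ = markovEntropy Q (k + 1) := by
          rw [markovEntropy_succ_eq_condEntropy, condEntropy_comp_measurePreserving hQ
            (measurable_block k) (measurable_path_apply k)]

lemma ae_tendsto_cnt_div (hQ : Ergodic (shiftT D) Q) :
    ∀ᵐ ω ∂Q, ∀ (k : ℕ) (w : Fin k → Fin D),
      Tendsto (fun n : ℕ => (cnt (List.ofFn w) (pref (path D ω) n) : ℝ) / n) atTop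
        (𝓝 (Q.real (block k ⁻¹' {w}))) := by
  refine ae_all_iff.2 fun k => ae_all_iff.2 fun w => ?_
  have hmeas : MeasurableSet (block k ⁻¹' {w}) := measurable_block k (measurableSet_singleton w)
  filter_upwards [ae_tendsto_birkhoffAverage hQ ((integrable_const (1 : ℝ)).indicator hmeas)]
    with ω hω
  rw [integral_indicator_const _ hmeas, smul_eq_mul, mul_one] at hω
  rw [← tendsto_add_atTop_iff_nat k]
  simp only [cnt_pref_path]
  simp only [birkhoffAverage, smul_eq_mul, inv_mul_eq_div] at hω
  exact tendsto_add_div_natCast_add hω 1 k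

lemma ae_forall_measureReal_block_pos (hQ : MeasurePreserving (shiftT D) Q Q) :
    ∀ᵐ ω ∂Q, ∀ k i : ℕ, 0 < Q.real (block k ⁻¹' {block k ((shiftT D)^[i] ω)}) :=
  ae_all_iff.2 fun k => ae_all_iff.2 fun i =>
    (hQ.iterate i).quasiMeasurePreserving.ae (ae_measureReal_preimage_singleton_pos (block k))

theorem ae_tendsto_neg_log_prod_Bpred (hQ : Ergodic (shiftT D) Q) :
    ∀ᵐ ω ∂Q, ∀ k : ℕ, Tendsto (fun n : ℕ => -Real.log (∏ m ∈ Finset.range n,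
      Bpred D (pref (path D ω) m) (path D ω m) k) / n) atTop (𝓝 (markovEntropy Q k)) := by
  let g (k : ℕ) (ω : Omega D) : ℝ :=
    -Real.log (Qstr D Q (path D ω) (k + 1) / Qstr D Q (path D ω) k)
  have hg (k : ℕ) : Integrable (g k) Q := by
    simp only [g, Qstr_path]
    exact (Integrable.of_finite (f := fun w : Fin (k + 1) → Fin D => -Real.log
      (Q.real (block (k + 1) ⁻¹' {w}) / Q.real (block k ⁻¹' {Fin.init w})))).comp_measurable
      (measurable_block (k + 1))
  filter_upwards [ae_tendsto_cnt_div hQ, ae_forall_measureReal_block_pos hQ.toMeasurePreserving,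
    ae_all_iff.2 fun k => ae_tendsto_birkhoffAverage hQ (hg k)] with ω hfreq hpos hbirkhoff k
  simp only [Real.log_prod fun _ _ => (Bpred_pos _ _ _).ne', ← Finset.sum_neg_distrib]
  cases k with
  | zero =>
    refine tendsto_const_nhds.congr' ?_
    filter_upwards [eventually_ne_atTop 0] with n hn
    simp [Bpred, markovEntropy, hn]
  | succ k =>
    refine tendsto_sum_div_of_tendsto_add_sub k (tendsto_neg_log_Bpred_sub k hfreq hpos) ?_
    have haverage := hbirkhoff k
    simp only [birkhoffAverage, birkhoffSum, smul_eq_mul, inv_mul_eq_div] at haverage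
    exact haverage

end ErgodicSource

/-! ### Exponential rates -/

section DecayRates

open Asymptotics

/-- The sequence `f` decays at exponential rate at least `h`: it is `O(exp (-r n))` for every
`r < h`. The rate `h` may be negative, in which case `f` is allowed to grow. -/
def DecaysAtRate (f : ℕ → ℝ) (h : ℝ) : Prop :=
  ∀ r < h, f =O[atTop] fun n : ℕ => Real.exp (-(r * n))

variable {f g β : ℕ → ℝ} {h h' : ℝ}

namespace DecaysAtRate

lemma zero (h : ℝ) : DecaysAtRate (fun _ => 0) h := fun _ _ => isBigO_zero _ _

lemma anti (hf : DecaysAtRate f h) (hle : h' ≤ h) : DecaysAtRate f h' :=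
  fun r hr => hf r (hr.trans_le hle)

lemma add (hf : DecaysAtRate f h) (hg : DecaysAtRate g h) :
    DecaysAtRate (fun n => f n + g n) h :=
  fun r hr => (hf r hr).add (hg r hr)

lemma sum {ι : Type*} {F : ι → ℕ → ℝ} {t : Finset ι} (hF : ∀ i ∈ t, DecaysAtRate (F i) h) :
    DecaysAtRate (fun n => ∑ i ∈ t, F i n) h :=
  fun r hr => IsBigO.fun_sum fun i hi => hF i hi r hr

lemma mul (hf : DecaysAtRate f h) (hg : DecaysAtRate g h') :
    DecaysAtRate (fun n => f n * g n) (h + h') := by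
  intro r hr
  have hmul := (hf (h - (h + h' - r) / 2) (by linarith)).mul
    (hg (h' - (h + h' - r) / 2) (by linarith))
  refine hmul.congr_right fun n => ?_
  rw [← Real.exp_add]
  ring_nf

lemma of_tendsto (hβ : ∀ n, 0 < β n)
    (hlog : Tendsto (fun n : ℕ => -Real.log (β n) / n) atTop (𝓝 h)) : DecaysAtRate β h := by
  intro r hr
  refine IsBigO.of_bound 1 ?_
  filter_upwards [hlog.eventually_const_lt hr, eventually_gt_atTop 0] with n hn hn0
  rw [lt_div_iff₀ (Nat.cast_pos.2 hn0)] at hn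
  rw [one_mul, Real.norm_of_nonneg (hβ n).le, Real.norm_of_nonneg (Real.exp_pos _).le,
    ← Real.log_le_iff_le_exp (hβ n)]
  linarith

lemma of_succ_le_add (hf : ∀ n, 0 ≤ f n) (hg : DecaysAtRate g h) (hh : h ≤ 0)
    (hrec : ∀ᶠ n in atTop, f (n + 1) ≤ f n + g n) : DecaysAtRate f h := by
  intro r hr
  obtain ⟨C, hC, hgC⟩ := (hg r hr).exists_pos
  obtain ⟨N, hN⟩ := eventually_atTop.1 (hrec.and hgC.bound)
  have hq : 0 < Real.exp (-r) - 1 := sub_pos.2 (Real.one_lt_exp_iff.2 (by linarith))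
  set K := f N + C / (Real.exp (-r) - 1) with hK
  have hKC : C ≤ K * (Real.exp (-r) - 1) := by
    rw [hK, add_mul, div_mul_cancel₀ _ hq.ne']
    exact le_add_of_nonneg_left (mul_nonneg (hf N) hq.le)
  have hK_nonneg : 0 ≤ K := add_nonneg (hf N) (div_pos hC hq).le
  have hbound (n : ℕ) (hn : N ≤ n) : f n ≤ K * Real.exp (-(r * n)) := by
    induction n, hn using Nat.le_induction with
    | base =>
      have hexp : 1 ≤ Real.exp (-(r * N)) :=
        Real.one_le_exp (by nlinarith [Nat.cast_nonneg (α := ℝ) N])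
      exact (le_add_of_nonneg_right (div_pos hC hq).le).trans
        (le_mul_of_one_le_right hK_nonneg hexp)
    | succ n hn ih =>
      obtain ⟨hstep, hgn⟩ := hN n hn
      rw [Real.norm_of_nonneg (Real.exp_pos _).le] at hgn
      calc f (n + 1) ≤ K * Real.exp (-(r * n)) + C * Real.exp (-(r * n)) := by
            linarith [Real.le_norm_self (g n)]
        _ ≤ K * Real.exp (-(r * n)) + K * (Real.exp (-r) - 1) * Real.exp (-(r * n)) := by gcongr
        _ = K * (Real.exp (-r) * Real.exp (-(r * n))) := by ring
        _ = K * Real.exp (-(r * (n + 1 : ℕ))) := by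
            rw [← Real.exp_add]
            push_cast
            ring_nf
  refine IsBigO.of_bound K ?_
  filter_upwards [eventually_ge_atTop N] with n hn
  rw [Real.norm_of_nonneg (hf n), Real.norm_of_nonneg (Real.exp_pos _).le]
  exact hbound n hn

-- Dividing by the products of the multipliers turns the recursion into an additive one.
lemma of_succ_le_add_mul {b : ℕ → ℝ} (hf : ∀ n, 0 ≤ f n) (hb : ∀ n, 0 < b n)
    (hg : DecaysAtRate g h) (hh : h ≤ h')
    (hlog : Tendsto (fun n : ℕ => -Real.log (∏ m ∈ Finset.range n, b m) / n) atTop (𝓝 h'))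
    (hrec : ∀ᶠ n in atTop, f (n + 1) ≤ (f n + g n) * b n) : DecaysAtRate f h := by
  set β : ℕ → ℝ := fun n => ∏ m ∈ Finset.range n, b m
  have hβ (n : ℕ) : 0 < β n := Finset.prod_pos fun m _ => hb m
  have hβ_inv : DecaysAtRate (fun n => (β n)⁻¹) (-h') :=
    of_tendsto (fun n => inv_pos.2 (hβ n)) (hlog.neg.congr fun n => by
      rw [Real.log_inv, neg_div (n : ℝ) (-Real.log (β n))])
  have hquot : DecaysAtRate (fun n => f n * (β n)⁻¹) (h + -h') := by
    refine of_succ_le_add (fun n => mul_nonneg (hf n) (inv_pos.2 (hβ n)).le) (hg.mul hβ_inv)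
      (by linarith) (hrec.mono fun n hn => ?_)
    have hsucc : β (n + 1) = β n * b n := Finset.prod_range_succ b n
    calc f (n + 1) * (β (n + 1))⁻¹ ≤ (f n + g n) * b n * (β (n + 1))⁻¹ := by
          gcongr
          exact (inv_pos.2 (hβ (n + 1))).le
      _ = f n * (β n)⁻¹ + g n * (β n)⁻¹ := by
          rw [hsucc]
          field_simp [(hβ n).ne', (hb n).ne']
  have hmul := hquot.mul (of_tendsto hβ hlog)
  rw [neg_add_cancel_right] at hmul
  simpa only [inv_mul_cancel_right₀ (hβ _).ne'] using hmul

lemma eventually_lt_neg_log_div (hf : DecaysAtRate f h) (hpos : ∀ᶠ n in atTop, 0 < f n) {r : ℝ}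
    (hr : r < h) : ∀ᶠ n : ℕ in atTop, r < -Real.log (f n) / n := by
  obtain ⟨r', hrr', hr'⟩ := exists_between hr
  have hexp : (fun n : ℕ => Real.exp (-(r' * n))) =o[atTop] fun n : ℕ => Real.exp (-(r * n)) := by
    refine Real.isLittleO_exp_comp_exp_comp.2 ?_
    refine (tendsto_natCast_atTop_atTop.const_mul_atTop (sub_pos.2 hrr')).congr fun n => ?_
    ring
  filter_upwards [((hf r' hr').trans_isLittleO hexp).bound one_half_pos, hpos,
    eventually_gt_atTop 0] with n hn hfn hn0
  rw [Real.norm_of_nonneg hfn.le, Real.norm_of_nonneg (Real.exp_pos _).le] at hn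
  have hlt : Real.log (f n) < -(r * n) :=
    (Real.log_lt_iff_lt_exp hfn).2 (by linarith [Real.exp_pos (-(r * n))])
  rw [lt_div_iff₀ (Nat.cast_pos.2 hn0)]
  linarith

end DecaysAtRate

lemma tendsto_neg_log_div_of_decaysAtRate {c : ℝ} (hc : 0 < c) (hβ : ∀ n, 0 < β n)
    (hlog : Tendsto (fun n : ℕ => -Real.log (β n) / n) atTop (𝓝 h)) (hf : DecaysAtRate f h)
    (hle : ∀ᶠ n in atTop, c * β n ≤ f n) :
    Tendsto (fun n : ℕ => -Real.log (f n) / n) atTop (𝓝 h) := by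
  have hupper : Tendsto (fun n : ℕ => -Real.log (c * β n) / n) atTop (𝓝 h) := by
    have hadd := (tendsto_const_div_atTop_nhds_zero_nat (-Real.log c)).add hlog
    rw [zero_add] at hadd
    refine hadd.congr fun n => ?_
    rw [Real.log_mul hc.ne' (hβ n).ne', neg_add, add_div]
  refine tendsto_order.2 ⟨fun r hr => ?_, fun r hr => ?_⟩
  · exact hf.eventually_lt_neg_log_div
      (hle.mono fun n hn => (mul_pos hc (hβ n)).trans_le hn) hr
  · filter_upwards [hupper.eventually_lt_const hr, hle] with n hn hcn
    refine lt_of_le_of_lt ?_ hn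
    gcongr
    exact mul_pos hc (hβ n)

lemma tendsto_neg_log_prod_Icc_div {b : ℕ → ℝ} (hb : ∀ n, 0 < b n)
    (hlog : Tendsto (fun n : ℕ => -Real.log (∏ m ∈ Finset.range n, b m) / n) atTop (𝓝 h))
    (s : ℕ) :
    Tendsto (fun n : ℕ => -Real.log (∏ i ∈ Finset.Icc (s + 1) n, b (i - 1)) / n) atTop
      (𝓝 h) := by
  have hprod (n : ℕ) : 0 < ∏ m ∈ Finset.range n, b m := Finset.prod_pos fun m _ => hb m
  have hadd := hlog.add
    (tendsto_const_div_atTop_nhds_zero_nat (Real.log (∏ m ∈ Finset.range s, b m)))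
  rw [add_zero] at hadd
  refine hadd.congr' ?_
  filter_upwards [eventually_ge_atTop s] with n hn
  have hshift : ∏ i ∈ Finset.Icc (s + 1) n, b (i - 1) = ∏ m ∈ Finset.Ico s n, b m := by
    rw [← Finset.Ico_add_one_right_eq_Icc, ← Finset.prod_Ico_add']
    simp only [Nat.add_sub_cancel]
  have hsplit := Finset.prod_range_mul_prod_Ico b hn
  have hIco : 0 < ∏ m ∈ Finset.Ico s n, b m := Finset.prod_pos fun m _ => hb m
  rw [hshift, ← hsplit, Real.log_mul (hprod s).ne' hIco.ne']
  ring

end DecayRates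

/-! ### The truncated switch distribution -/

section SwitchDistribution

variable {D : ℕ} {p : ℕ → ℝ}

lemma PpartT_nonneg (hp : ∀ n, p n ∈ Set.Icc (0 : ℝ) 1) (s : ℕ) (x : ℕ → Fin D) (n : ℕ) (k : ℤ) :
    0 ≤ PpartT D p s x n k := by
  have hB (m j : ℕ) : 0 ≤ Bpred D (pref x m) (x m) j := (Bpred_pos _ _ _).le
  have hq (m : ℕ) : 0 ≤ 1 - p m := sub_nonneg.2 (hp m).2
  induction n using Nat.twoStepInduction generalizing k with
  | zero => exact le_rfl
  | one =>
    rw [PpartT]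
    split_ifs
    · exact mul_nonneg (hp 0).1 (hB 0 0)
    · exact mul_nonneg (hq 0) (hB 0 1)
    · exact le_rfl
  | more n _ ih =>
    rw [PpartT]
    split_ifs
    · exact mul_nonneg (add_nonneg (mul_nonneg (hp _).1 (ih _)) (mul_nonneg (hq _) (ih _)))
        (hB _ _)
    · exact le_rfl

lemma PpartT_of_lt_neg_one (p : ℕ → ℝ) (s : ℕ) (x : ℕ → Fin D) (n : ℕ) {k : ℤ} (hk : k < -1) :
    PpartT D p s x n k = 0 := by
  rcases n with _ | _ | n
  · rfl
  · rw [PpartT, if_neg hk.ne, if_neg (by omega)]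
  · rw [PpartT, if_neg (by omega)]

lemma PpartT_succ_le (hp : ∀ n, p n ∈ Set.Icc (0 : ℝ) 1) (s : ℕ) (x : ℕ → Fin D) {n : ℕ}
    (hn : 1 ≤ n) (k : ℕ) :
    PpartT D p s x (n + 1) (k - 1) ≤
      (PpartT D p s x n (k - 1) + PpartT D p s x n (k - 1 - 1)) * Bpred D (pref x n) (x n) k := by
  obtain ⟨n, rfl⟩ := Nat.exists_eq_add_of_le' hn
  have hB : 0 ≤ Bpred D (pref x (n + 1)) (x (n + 1)) k := (Bpred_pos _ _ _).le
  have hP := PpartT_nonneg hp s x (n + 1)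
  rw [PpartT, sub_add_cancel, Int.toNat_natCast]
  split_ifs
  · gcongr
    · exact mul_le_of_le_one_left (hP _) (hp _).2
    · exact mul_le_of_le_one_left (hP _) (sub_le_self _ (hp _).1)
  · exact mul_nonneg (add_nonneg (hP _) (hP _)) hB

lemma PbulT_nonneg (hp : ∀ n, p n ∈ Set.Icc (0 : ℝ) 1) (s : ℕ) (x : ℕ → Fin D) (n : ℕ) :
    0 ≤ PbulT D p s x n := by
  induction n with
  | zero => exact le_rfl
  | succ n ih =>
    rw [PbulT]
    split_ifs
    · exact mul_nonneg (add_nonneg ih (mul_nonneg (sub_nonneg.2 (hp n).2)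
        (PpartT_nonneg hp s x n s))) (Bpred_pos _ _ _).le
    · exact le_rfl

lemma PbulT_succ_le (hp : ∀ n, p n ∈ Set.Icc (0 : ℝ) 1) (s : ℕ) (x : ℕ → Fin D) (n : ℕ) :
    PbulT D p s x (n + 1) ≤
      (PbulT D p s x n + PpartT D p s x n s) * Bpred D (pref x n) (x n) (s + 1) := by
  have hB : 0 ≤ Bpred D (pref x n) (x n) (s + 1) := (Bpred_pos _ _ _).le
  have hP := PpartT_nonneg hp s x n s
  rw [PbulT]
  split_ifs
  · gcongr
    exact mul_le_of_le_one_left hP (sub_le_self _ (hp n).1)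
  · exact mul_nonneg (add_nonneg (PbulT_nonneg hp s x n) hP) hB

lemma PpartT_succ_self_pos (hp : ∀ n, p n ∈ Set.Icc (0 : ℝ) 1) {s : ℕ} (hlt : ∀ i ≤ s, p i < 1)
    (x : ℕ → Fin D) {k : ℕ} (hk : k ≤ s) : 0 < PpartT D p s x (k + 1) k := by
  induction k with
  | zero =>
    rw [zero_add, PpartT, if_neg (by simp), if_pos Nat.cast_zero]
    exact mul_pos (sub_pos.2 (hlt 0 s.zero_le)) (Bpred_pos _ _ _)
  | succ k ih =>
    rw [PpartT, if_pos (by grind), Nat.cast_succ, add_sub_cancel_right]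
    exact mul_pos (add_pos_of_nonneg_of_pos (mul_nonneg (hp _).1 (PpartT_nonneg hp s x _ _))
      (mul_pos (sub_pos.2 (hlt _ hk)) (ih (by omega)))) (Bpred_pos _ _ _)

-- Switching from order `s` moves mass to the dummy component, so none is lost.
lemma PpartT_add_PbulT_mul_Bpred_le (hp : ∀ n, p n ∈ Set.Icc (0 : ℝ) 1) {s n : ℕ}
    (hn : s + 1 ≤ n) (x : ℕ → Fin D) :
    (PpartT D p s x n s + PbulT D p s x n) * Bpred D (pref x n) (x n) (s + 1) ≤
      PpartT D p s x (n + 1) s + PbulT D p s x (n + 1) := by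
  have hbul : PbulT D p s x (n + 1) =
      (PbulT D p s x n + (1 - p n) * PpartT D p s x n s) * Bpred D (pref x n) (x n) (s + 1) := by
    rw [PbulT, if_pos hn]
  obtain ⟨n, rfl⟩ := Nat.exists_eq_add_of_le' (Nat.le_of_add_left_le hn)
  have hB : 0 ≤ Bpred D (pref x (n + 1)) (x (n + 1)) (s + 1) := (Bpred_pos _ _ _).le
  have hgain : 0 ≤ (1 - p (n + 1)) * PpartT D p s x (n + 1) (s - 1) :=
    mul_nonneg (sub_nonneg.2 (hp _).2) (PpartT_nonneg hp s x _ _)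
  have hidx : ((s : ℤ) + 1).toNat = s + 1 := rfl
  rw [hbul, PpartT, if_pos (by omega), hidx, ← add_mul]
  refine mul_le_mul_of_nonneg_right ?_ hB
  linarith

lemma exists_pos_mul_prod_Bpred_le_PsT (hp : ∀ n, p n ∈ Set.Icc (0 : ℝ) 1) {s : ℕ}
    (hlt : ∀ i ≤ s, p i < 1) (x : ℕ → Fin D) :
    ∃ c > 0, ∀ n ≥ s + 1,
      c * ∏ m ∈ Finset.range n, Bpred D (pref x m) (x m) (s + 1) ≤ PsT D p s x n := by
  set β : ℕ → ℝ := fun n => ∏ m ∈ Finset.range n, Bpred D (pref x m) (x m) (s + 1)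
  have hβ (n : ℕ) : 0 < β n := Finset.prod_pos fun m _ => Bpred_pos _ _ _
  set S : ℕ → ℝ := fun n => PpartT D p s x n s + PbulT D p s x n
  have hS : 0 < S (s + 1) := add_pos_of_pos_of_nonneg (PpartT_succ_self_pos hp hlt x le_rfl)
    (PbulT_nonneg hp s x _)
  have hSβ (n : ℕ) (hn : s + 1 ≤ n) : S (s + 1) / β (s + 1) * β n ≤ S n := by
    induction n, hn using Nat.le_induction with
    | base => rw [div_mul_cancel₀ _ (hβ _).ne']
    | succ n hn ih =>
      calc S (s + 1) / β (s + 1) * β (n + 1)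
          = S (s + 1) / β (s + 1) * β n * Bpred D (pref x n) (x n) (s + 1) := by
            rw [mul_assoc]
            simp only [β, Finset.prod_range_succ]
        _ ≤ S n * Bpred D (pref x n) (x n) (s + 1) :=
            mul_le_mul_of_nonneg_right ih (Bpred_pos _ _ _).le
        _ ≤ S (n + 1) := PpartT_add_PbulT_mul_Bpred_le hp hn x
  have hSP (n : ℕ) : S n ≤ PsT D p s x n := by
    rw [PsT, Finset.sum_range_succ, Nat.cast_succ, add_sub_cancel_right]
    have := Finset.sum_nonneg fun k (_ : k ∈ Finset.range (s + 1)) =>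
      PpartT_nonneg hp s x n ((k : ℤ) - 1)
    simp only [S]
    linarith
  exact ⟨S (s + 1) / β (s + 1), div_pos hS (hβ _), fun n hn => (hSβ n hn).trans (hSP n)⟩

variable {x : ℕ → Fin D} {h : ℕ → ℝ}

lemma decaysAtRate_PpartT (hp : ∀ n, p n ∈ Set.Icc (0 : ℝ) 1) (s : ℕ) (hh : Antitone h)
    (hlog : ∀ k, Tendsto (fun n : ℕ => -Real.log (∏ m ∈ Finset.range n,
      Bpred D (pref x m) (x m) k) / n) atTop (𝓝 (h k))) (k : ℕ) :
    DecaysAtRate (fun n => PpartT D p s x n (k - 1)) (h k) := by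
  have hstep (k : ℕ) (hprev : DecaysAtRate (fun n => PpartT D p s x n (k - 1 - 1)) (h k)) :
      DecaysAtRate (fun n => PpartT D p s x n (k - 1)) (h k) :=
    .of_succ_le_add_mul (fun n => PpartT_nonneg hp s x n _) (fun n => Bpred_pos _ _ _) hprev
      le_rfl (hlog k) (eventually_atTop.2 ⟨1, fun n hn => PpartT_succ_le hp s x hn k⟩)
  induction k with
  | zero =>
    refine hstep 0 ?_
    simpa only [PpartT_of_lt_neg_one p s x _ (show ((0 : ℕ) : ℤ) - 1 - 1 < -1 by norm_num)]
      using DecaysAtRate.zero _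
  | succ k ih =>
    refine hstep (k + 1) ?_
    simpa only [Nat.cast_succ, add_sub_cancel_right] using ih.anti (hh k.le_succ)

lemma decaysAtRate_PsT (hp : ∀ n, p n ∈ Set.Icc (0 : ℝ) 1) (s : ℕ) (hh : Antitone h)
    (hlog : ∀ k, Tendsto (fun n : ℕ => -Real.log (∏ m ∈ Finset.range n,
      Bpred D (pref x m) (x m) k) / n) atTop (𝓝 (h k))) :
    DecaysAtRate (PsT D p s x) (h (s + 1)) := by
  have hpart := decaysAtRate_PpartT hp s hh hlog
  have hlast := hpart (s + 1)
  simp only [Nat.cast_succ, add_sub_cancel_right] at hlast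
  have hbul : DecaysAtRate (PbulT D p s x) (h (s + 1)) :=
    .of_succ_le_add_mul (PbulT_nonneg hp s x) (fun n => Bpred_pos _ _ _) hlast le_rfl
      (hlog (s + 1)) (.of_forall (PbulT_succ_le hp s x))
  exact (DecaysAtRate.sum fun k hk => (hpart k).anti (hh (by grind))).add hbul

theorem tendsto_neg_log_PsT_div (hp : ∀ n, p n ∈ Set.Icc (0 : ℝ) 1) {s : ℕ}
    (hlt : ∀ i ≤ s, p i < 1) (hh : Antitone h)
    (hlog : ∀ k, Tendsto (fun n : ℕ => -Real.log (∏ m ∈ Finset.range n,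
      Bpred D (pref x m) (x m) k) / n) atTop (𝓝 (h k))) :
    Tendsto (fun n : ℕ => -Real.log (PsT D p s x n) / n) atTop (𝓝 (h (s + 1))) := by
  obtain ⟨c, hc, hle⟩ := exists_pos_mul_prod_Bpred_le_PsT hp hlt x
  exact tendsto_neg_log_div_of_decaysAtRate hc
    (fun n => Finset.prod_pos fun m _ => Bpred_pos _ _ _) (hlog (s + 1))
    (decaysAtRate_PsT hp s hh hlog) (eventually_atTop.2 ⟨s + 1, hle⟩)

end SwitchDistribution

theorem truncated_switch_entropy_limit_general
    (D : ℕ) (p : ℕ → ℝ) (s : ℕ) (hp : ∀ n, p n ∈ Set.Icc (0 : ℝ) 1) (hlt : ∀ i ≤ s, p i < 1)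
    (Q : Measure (Omega D)) [IsProbabilityMeasure Q] (hQerg : Ergodic (shiftT D) Q) :
    ∀ᵐ ω ∂Q,
      Tendsto (fun n : ℕ => -Real.log (PsT D p s (path D ω) n) / n) atTop
        (𝓝 (∫ ω', -Real.log
          (Qstr D Q (path D ω') (s + 1) / Qstr D Q (path D ω') s) ∂Q)) ∧
      Tendsto (fun n : ℕ =>
          -Real.log (∏ i ∈ Finset.Icc (s + 1) n,
            Bpred D (pref (path D ω) (i - 1)) (path D ω (i - 1)) (s + 1)) / n) atTop
        (𝓝 (∫ ω', -Real.log
          (Qstr D Q (path D ω') (s + 1) / Qstr D Q (path D ω') s) ∂Q)) := by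
  filter_upwards [ae_tendsto_neg_log_prod_Bpred hQerg] with ω hlog
  exact ⟨tendsto_neg_log_PsT_div hp hlt (antitone_markovEntropy hQerg.toMeasurePreserving) hlog,
    tendsto_neg_log_prod_Icc_div (fun _ => Bpred_pos _ _ _) (hlog (s + 1)) s⟩

/-- Fix a depth parameter `s ≥ 0` and let `P_s` denote the depth-`s` truncated switch
distribution. Then for every stationary ergodic probability measure `Q` on
`Ω = {1,...,D}^ℤ`, `Q`-almost surely
`lim (1/n)·(−log P_s(X_1^n)) = lim (1/n)·(−log B(X_{s+1}^n|X_1^s, s))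
  = E_Q[−log Q(X_{s+1}|X_1^s)]`,
where `B(x_{s+1}^n|x_1^s, s) = ∏_{i=s+1}^n B(x_i|x_1^{i-1}, s)` and
`Q(X_{s+1}|X_1^s) = Q(X_1^{s+1})/Q(X_1^s)` evaluated at the sample path. -/
theorem truncated_switch_entropy_limit
    (D : ℕ) (hD : 2 ≤ D) (p : ℕ → ℝ) (hp : ∀ n, p n ∈ Set.Ioo (0 : ℝ) 1)
    (hprod : ∃ L, 0 < L ∧ Tendsto (fun N : ℕ => ∏ i ∈ Finset.range N, p i) atTop (𝓝 L))
    (s : ℕ)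
    (Q : Measure (Omega D)) [IsProbabilityMeasure Q]
    (hQerg : Ergodic (shiftT D) Q) :
    ∀ᵐ ω ∂Q,
      Tendsto (fun n : ℕ => -Real.log (PsT D p s (path D ω) n) / n) atTop
        (𝓝 (∫ ω', -Real.log
          (Qstr D Q (path D ω') (s + 1) / Qstr D Q (path D ω') s) ∂Q)) ∧
      Tendsto (fun n : ℕ =>
          -Real.log (∏ i ∈ Finset.Icc (s + 1) n,
            Bpred D (pref (path D ω) (i - 1)) (path D ω (i - 1)) (s + 1)) / n) atTop
        (𝓝 (∫ ω', -Real.log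
          (Qstr D Q (path D ω') (s + 1) / Qstr D Q (path D ω') s) ∂Q)) := by
  exact truncated_switch_entropy_limit_general D p s (fun n => Set.Ioo_subset_Icc_self (hp n))
    (fun i _ => (hp i).2) Q hQerg
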